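/- (Double Hodge dual identity, coefficient form.) Let D, p, q ∈ ℕ with D = p + q, and let g : Matrix (Fin D) (Fin D) ℝ be symmetric and invertible, with inverse g⁻¹. Then for all i, r : Fin p → Fin D: det g · ∑_{k : Fin p → Fin D} ∑_{j : Fin q → Fin D} ∑_{s : Fin q → Fin D} (∏_{a : Fin p} g⁻¹ (i a) (k a)) · (∏_{b : Fin q} g⁻¹ (j b) (s b)) · ε(j ⊕ k) · ε(r ⊕ s) = (−1)^{pq} · q! · δ(i, r). This expresses that applying the Hodge dual twice to the coordinate p-form dx^{i₁} ∧ ⋯ ∧ dx^{i_p} returns (−1)^{pq+t} times the same form. -/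

import Mathlib

/-- Levi-Civita symbol: the determinant of the `D × D` matrix whose `(a,b)` entry is
`1` if `i a = b` and `0` otherwise. -/
def eps (R : Type*) [CommRing R] {D : ℕ} (i : Fin D → Fin D) : R :=
  Matrix.det (Matrix.of fun a b => if i a = b then (1 : R) else 0)

/-- Generalized Kronecker delta: the determinant of the `p × p` matrix whose
`(a,b)` entry is `1` if `j a = i b` and `0` otherwise. -/
def gdelta (R : Type*) [CommRing R] {p D : ℕ} (j i : Fin p → Fin D) : R :=
  Matrix.det (Matrix.of fun a b => if j a = i b then (1 : R) else 0)

/-! The contraction `∑ₛ ε(i ⊕ s) ε(r ⊕ s) = q! δ(i, r)` is trivial unless `i` is injective. In that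
case complete `i` by a complementary tuple `t` to a permutation `i ⊕ t`. Comparing both symbols with
`i ⊕ t` instead of `id` leaves their product unchanged and makes the resulting deltas block
triangular: `ε(i ⊕ s) ε(r ⊕ s) = δ(s, t) δ(r ⊕ s, i ⊕ t)`. Summing against `δ(s, t)` antisymmetrizes
over `s = t ∘ τ`, and each of the `q!` permutations `τ` contributes `δ(i, r)`.

For the Hodge identity, contracting all `p + q` indices of `ε` with a matrix `h` produces `det h`,
and swapping the blocks of `j ⊕ k` produces `(-1) ^ (p * q)`; what remains is this contraction. -/

open Matrix Equiv

section LeviCivita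

variable {R : Type*} [CommRing R] {p q D : ℕ}

theorem gdelta_eq_det_submatrix_one (j i : Fin p → Fin D) :
    gdelta R j i = ((1 : Matrix (Fin D) (Fin D) R).submatrix j i).det :=
  rfl

theorem eps_eq_gdelta_id (c : Fin D → Fin D) : eps R c = gdelta R c id :=
  rfl

theorem gdelta_comm (j i : Fin p → Fin D) : gdelta R j i = gdelta R i j := by
  rw [gdelta_eq_det_submatrix_one, ← det_transpose, transpose_submatrix, transpose_one,
    gdelta_eq_det_submatrix_one]

theorem gdelta_self {i : Fin p → Fin D} (hi : Function.Injective i) : gdelta R i i = 1 := by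
  rw [gdelta_eq_det_submatrix_one, submatrix_one i hi, det_one]

theorem gdelta_eq_zero_of_not_injective {j : Fin p → Fin D} (hj : ¬ Function.Injective j)
    (i : Fin p → Fin D) : gdelta R j i = 0 := by
  obtain ⟨a, b, hab, hne⟩ := Function.not_injective_iff.mp hj
  exact det_zero_of_row_eq hne (by ext x; simp only [of_apply, hab])

theorem gdelta_comp_perm_left (j i : Fin p → Fin D) (σ : Perm (Fin p)) :
    gdelta R (j ∘ σ) i = Perm.sign σ * gdelta R j i :=
  det_permute σ ((1 : Matrix (Fin D) (Fin D) R).submatrix j i)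

theorem gdelta_comp_perm_right (j i : Fin p → Fin D) (σ : Perm (Fin p)) :
    gdelta R j (i ∘ σ) = Perm.sign σ * gdelta R j i := by
  rw [gdelta_comm, gdelta_comp_perm_left, gdelta_comm]

theorem sign_mul_sign_self {α : Type*} [DecidableEq α] [Fintype α] (σ : Perm α) :
    (Perm.sign σ : R) * Perm.sign σ = 1 := by
  exact_mod_cast congrArg (Int.cast : ℤ → R) (Int.units_coe_mul_self (Perm.sign σ))

theorem gdelta_perm_mul_gdelta_perm (c d : Fin D → Fin D) (σ : Perm (Fin D)) :
    gdelta R c σ * gdelta R d σ = eps R c * eps R d := by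
  rw [← Function.id_comp σ, gdelta_comp_perm_right, gdelta_comp_perm_right, mul_mul_mul_comm,
    sign_mul_sign_self, one_mul, eps_eq_gdelta_id, eps_eq_gdelta_id]

theorem gdelta_append_append_of_ne {j i : Fin p → Fin D} {s t : Fin q → Fin D}
    (hjt : ∀ a b, j a ≠ t b) :
    gdelta R (Fin.append j s) (Fin.append i t) = gdelta R j i * gdelta R s t := by
  have hblocks : ((1 : Matrix (Fin D) (Fin D) R).submatrix (Fin.append j s)
        (Fin.append i t)).submatrix finSumFinEquiv finSumFinEquiv =
      fromBlocks ((1 : Matrix (Fin D) (Fin D) R).submatrix j i) 0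
        ((1 : Matrix (Fin D) (Fin D) R).submatrix s i)
        ((1 : Matrix (Fin D) (Fin D) R).submatrix s t) := by
    ext (a | a) (b | b) <;> simp [one_apply, hjt]
  simp only [gdelta_eq_det_submatrix_one]
  rw [← det_submatrix_equiv_self finSumFinEquiv, hblocks, det_fromBlocks_zero₁₂]

theorem sum_gdelta_mul (t : Fin q → Fin D) (F : (Fin q → Fin D) → R) :
    ∑ s : Fin q → Fin D, gdelta R s t * F s =
      ∑ τ : Perm (Fin q), (Perm.sign τ : R) * F (t ∘ τ) := by
  have hprod (s : Fin q → Fin D) (τ : Perm (Fin q)) :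
      ∏ a, (1 : Matrix (Fin D) (Fin D) R).submatrix t s (τ a) a =
        if t ∘ τ = s then 1 else 0 := by
    simp only [submatrix_apply, one_apply, Fintype.prod_ite_zero, Finset.prod_const_one,
      funext_iff, Function.comp_apply]
  simp_rw [gdelta_comm _ t, gdelta_eq_det_submatrix_one, det_apply', hprod, Finset.sum_mul]
  rw [Finset.sum_comm]
  simp

theorem sum_prod_mul_gdelta (M : Matrix (Fin p) (Fin D) R) (i : Fin p → Fin D) :
    ∑ f : Fin p → Fin D, (∏ a, M a (f a)) * gdelta R f i = (M.submatrix id i).det := by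
  simp_rw [mul_comm _ (gdelta R _ i)]
  rw [sum_gdelta_mul, ← det_transpose, det_apply']
  rfl

theorem det_submatrix_id_right (h : Matrix (Fin D) (Fin D) R) (c : Fin D → Fin D) :
    (h.submatrix c id).det = eps R c * h.det := by
  rw [eps_eq_gdelta_id, gdelta_eq_det_submatrix_one, ← det_mul]
  exact congrArg det (one_submatrix_mul c (Equiv.refl _) h).symm

theorem sum_prod_mul_eps (h : Matrix (Fin D) (Fin D) R) (c : Fin D → Fin D) :
    ∑ f : Fin D → Fin D, (∏ a, h (c a) (f a)) * eps R f = eps R c * h.det := by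
  rw [← det_submatrix_id_right]
  exact sum_prod_mul_gdelta (h.submatrix c id) id

theorem sum_prod_mul_prod_mul_eps_append (h : Matrix (Fin (p + q)) (Fin (p + q)) R)
    (i : Fin p → Fin (p + q)) (s : Fin q → Fin (p + q)) :
    ∑ k : Fin p → Fin (p + q), ∑ j : Fin q → Fin (p + q),
        (∏ a, h (i a) (k a)) * (∏ b, h (s b) (j b)) * eps R (Fin.append k j) =
      eps R (Fin.append i s) * h.det := by
  rw [← sum_prod_mul_eps, ← (Fin.appendEquiv p q).sum_comp, Fintype.sum_prod_type]
  simp [Fin.appendEquiv, Fin.prod_univ_add]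

theorem exists_perm_coe_eq_append {i : Fin p → Fin (p + q)} (hi : Function.Injective i) :
    ∃ (σ : Perm (Fin (p + q))) (t : Fin q → Fin (p + q)), ⇑σ = Fin.append i t := by
  obtain ⟨σ, hσ⟩ := Perm.exists_extending_pair _ _ (Fin.castAdd_injective p q) hi
  exact ⟨σ, σ ∘ Fin.natAdd p, by rw [← funext hσ]; exact Fin.append_castAdd_natAdd.symm⟩

theorem sum_eps_append_mul_eps_append (i r : Fin p → Fin (p + q)) :
    ∑ s : Fin q → Fin (p + q), eps R (Fin.append i s) * eps R (Fin.append r s) =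
      (q.factorial : R) * gdelta R i r := by
  by_cases hi : Function.Injective i
  · obtain ⟨σ, t, hσ⟩ := exists_perm_coe_eq_append hi
    obtain ⟨-, ht, hit⟩ := Fin.append_injective_iff.mp (hσ ▸ σ.injective)
    have hleft (s : Fin q → Fin (p + q)) :
        gdelta R (Fin.append i s) (Fin.append i t) = gdelta R s t := by
      rw [gdelta_append_append_of_ne hit, gdelta_self hi, one_mul]
    have hright (τ : Perm (Fin q)) :
        gdelta R (Fin.append r (t ∘ τ)) (Fin.append i t) = Perm.sign τ * gdelta R i r := by
      rw [gdelta_comm, gdelta_append_append_of_ne (t := t ∘ τ) fun a b => hit a (τ b),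
        gdelta_comp_perm_right, gdelta_self ht, mul_one, mul_comm]
    simp_rw [← gdelta_perm_mul_gdelta_perm _ _ σ, hσ, hleft, sum_gdelta_mul, hright, ← mul_assoc,
      sign_mul_sign_self, one_mul]
    simp [Fintype.card_perm]
  · have hzero (s : Fin q → Fin (p + q)) : eps R (Fin.append i s) = 0 :=
      gdelta_eq_zero_of_not_injective (fun h => hi (Fin.append_injective_iff.mp h).1) id
    simp_rw [hzero, zero_mul, Finset.sum_const_zero, gdelta_eq_zero_of_not_injective hi, mul_zero]

end LeviCivita

section BlockSwap

variable {p q : ℕ}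

theorem val_finRotate_pow (n m : ℕ) (x : Fin n) :
    ((finRotate n ^ m) x : ℕ) = (x + m) % n := by
  induction m with
  | zero => simp [Nat.mod_eq_of_lt x.isLt]
  | succ m ih =>
    have := x.neZero
    rw [pow_succ', Perm.mul_apply, finRotate_apply, Fin.val_add, ih]
    simp [Nat.add_assoc]

theorem finCongr_trans_finAddFlip (p q : ℕ) :
    (finCongr (Nat.add_comm p q)).trans finAddFlip = finRotate (p + q) ^ p := by
  ext x
  obtain ⟨y, rfl⟩ := (finCongr (Nat.add_comm q p)).surjective x
  rw [val_finRotate_pow]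
  induction y using Fin.addCases with
  | left b => simp [Nat.add_comm, Nat.mod_eq_of_lt]
  | right a =>
    have hwrap : (a + q + p) % (p + q) = a := by
      rw [show (a : ℕ) + q + p = a + (p + q) by ring, Nat.add_mod_right,
        Nat.mod_eq_of_lt (by omega)]
    simp [hwrap]

theorem sign_finRotate_add_pow (p q : ℕ) :
    Perm.sign (finRotate (p + q) ^ p) = (-1) ^ (p * q) := by
  rw [map_pow, sign_finRotate, ← pow_mul]
  cases p with
  | zero => simp
  | succ n =>
    have hexp : (n + 1 + q - 1) * (n + 1) = n * (n + 1) + (n + 1) * q := by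
      rw [show n + 1 + q - 1 = n + q by omega]; ring
    rw [hexp, pow_add, (Nat.even_mul_succ_self n).neg_one_pow, one_mul]

theorem append_comp_finAddFlip {α : Type*} (k : Fin p → α) (j : Fin q → α) :
    Fin.append k j ∘ finAddFlip = Fin.append j k := by
  funext x
  induction x using Fin.addCases <;> simp

theorem eps_append_swap {R : Type*} [CommRing R] (k : Fin p → Fin (p + q))
    (j : Fin q → Fin (p + q)) :
    eps R (Fin.append j k ∘ Fin.cast (Nat.add_comm p q)) =
      (-1) ^ (p * q) * eps R (Fin.append k j) := by
  have hperm : Fin.append j k ∘ Fin.cast (Nat.add_comm p q) =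
      Fin.append k j ∘ (finCongr (Nat.add_comm p q)).trans finAddFlip := by
    rw [← append_comp_finAddFlip k j]; rfl
  rw [hperm, eps_eq_gdelta_id, gdelta_comp_perm_left, finCongr_trans_finAddFlip,
    sign_finRotate_add_pow, ← eps_eq_gdelta_id]
  simp

end BlockSwap

theorem sum_prod_mul_prod_mul_eps_append_mul_eps_append {R : Type*} [CommRing R] {p q : ℕ}
    (h : Matrix (Fin (p + q)) (Fin (p + q)) R) (i r : Fin p → Fin (p + q)) :
    ∑ k : Fin p → Fin (p + q), ∑ j : Fin q → Fin (p + q), ∑ s : Fin q → Fin (p + q),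
        (∏ a, h (i a) (k a)) * (∏ b, hᵀ (j b) (s b))
          * eps R (Fin.append j k ∘ Fin.cast (Nat.add_comm p q)) * eps R (Fin.append r s) =
      h.det * ((-1) ^ (p * q) * (q.factorial : R) * gdelta R i r) := by
  calc
    _ = ∑ s : Fin q → Fin (p + q), (-1) ^ (p * q) *
          (∑ k : Fin p → Fin (p + q), ∑ j : Fin q → Fin (p + q),
            (∏ a, h (i a) (k a)) * (∏ b, h (s b) (j b)) * eps R (Fin.append k j)) *
          eps R (Fin.append r s) := by
      rw [Finset.sum_comm_cycle]
      simp_rw [eps_append_swap, transpose_apply, Finset.mul_sum, Finset.sum_mul]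
      exact Finset.sum_congr rfl fun s _ => Finset.sum_congr rfl fun k _ =>
        Finset.sum_congr rfl fun j _ => by ring
    _ = h.det * (-1) ^ (p * q) *
          ∑ s : Fin q → Fin (p + q), eps R (Fin.append i s) * eps R (Fin.append r s) := by
      simp_rw [sum_prod_mul_prod_mul_eps_append, Finset.mul_sum]
      exact Finset.sum_congr rfl fun s _ => by ring
    _ = _ := by rw [sum_eps_append_mul_eps_append]; ring

theorem double_hodge_dual_coeff_general {R : Type*} [CommRing R] (p q : ℕ)
    (g : Matrix (Fin (p + q)) (Fin (p + q)) R) (hsymm : g.IsSymm) (hg : IsUnit g.det)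
    (i r : Fin p → Fin (p + q)) :
    g.det * ∑ k : Fin p → Fin (p + q), ∑ j : Fin q → Fin (p + q),
        ∑ s : Fin q → Fin (p + q),
          (∏ a : Fin p, g⁻¹ (i a) (k a)) * (∏ b : Fin q, g⁻¹ (j b) (s b))
            * eps R (Fin.append j k ∘ Fin.cast (Nat.add_comm p q))
            * eps R (Fin.append r s)
      = (-1) ^ (p * q) * (q.factorial : R) * gdelta R i r := by
  have hdet : g.det * g⁻¹.det = 1 := by rw [← det_mul, mul_nonsing_inv g hg, det_one]
  have hsum := sum_prod_mul_prod_mul_eps_append_mul_eps_append g⁻¹ i r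
  rw [hsymm.inv.eq] at hsum
  rw [hsum, ← mul_assoc, hdet, one_mul]

/-- Double Hodge dual identity in coefficient form, for a symmetric invertible
metric `g` in dimension `D = p + q`: applying the Hodge dual twice to a coordinate
`p`-form returns `(-1)^{pq}` times the same form. -/
theorem double_hodge_dual_coeff (p q : ℕ)
    (g : Matrix (Fin (p + q)) (Fin (p + q)) ℝ)
    (hsymm : g.IsSymm) (hg : IsUnit g.det)
    (i r : Fin p → Fin (p + q)) :
    g.det * ∑ k : Fin p → Fin (p + q), ∑ j : Fin q → Fin (p + q),
        ∑ s : Fin q → Fin (p + q),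
          (∏ a : Fin p, g⁻¹ (i a) (k a)) * (∏ b : Fin q, g⁻¹ (j b) (s b))
            * eps ℝ (Fin.append j k ∘ Fin.cast (Nat.add_comm p q))
            * eps ℝ (Fin.append r s)
      = (-1) ^ (p * q) * (q.factorial : ℝ) * gdelta ℝ i r :=
  double_hodge_dual_coeff_general p q g hsymm hg i r
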